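/- arXiv:0706.1092 — 2 statements merged into one kernel-verified Lean document; each statement's English description precedes it below -/
import Mathlib

section
/- Let A₁, …, A_l be finite subsets of a commutative semigroup (G,+). Then the function (n₁,…,n_l) ↦ |n₁*A₁ + ⋯ + n_l*A_l| from ℕ₀^l to ℕ₀ is strongly eventually polynomial: there exists a constant c ∈ ℕ such that for any l-tuple (n₁,…,n_l), if the arguments n_i not exceeding c are fixed, then |n₁*A₁ + ⋯ + n_l*A_l| is a polynomial function of the remaining arguments n_i that are bigger than c. -/
open Pointwise

/-- The `n`-fold sumset `n*A` in a commutative monoid (the commutative-semigroup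
statement is interpreted, as in the paper, in a semigroup with an adjoined neutral
element, so that `0*A = {0}`). -/
def iterSumset {G : Type*} [AddCommMonoid G] : ℕ → Set G → Set G
  | 0, _ => {0}
  | n + 1, A => iterSumset n A + A

/-- A function `f : ℕ₀^l → ℝ` is strongly eventually polynomial if there is a constant
`c ∈ ℕ` and, for every word `w ∈ ({0,…,c} ∪ {∞})^l` (encoded as `Fin l → Option ℕ`,
with `none` playing the role of `∞`), a polynomial `p_w ∈ ℝ[x₁,…,x_l]` such that
`f(n) = p_{w(n)}(n)`, where `w(n)_i = n_i` if `n_i ≤ c` and `w(n)_i = ∞` if `n_i > c`. -/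
def StronglyEventuallyPolynomial {l : ℕ} (f : (Fin l → ℕ) → ℝ) : Prop :=
  ∃ c : ℕ, 0 < c ∧ ∃ p : (Fin l → Option ℕ) → MvPolynomial (Fin l) ℝ,
    ∀ n : Fin l → ℕ,
      f n = MvPolynomial.eval (fun i => (n i : ℝ))
        (p fun i => if n i ≤ c then some (n i) else none)

/-- `binom(m+r, r)` is polynomial in `m`. -/
lemma exists_poly_choose (r : ℕ) :
    ∃ P : Polynomial ℝ, ∀ m : ℕ, (((m + r).choose r : ℕ) : ℝ) = P.eval (m : ℝ) := by
  refine ⟨Polynomial.C ((r.factorial : ℝ)⁻¹) *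
    ((descPochhammer ℝ r).comp (Polynomial.X + Polynomial.C (r : ℝ))), fun m => ?_⟩
  have h := descPochhammer_eval_eq_descFactorial ℝ (m + r) r
  have hr : (r.factorial : ℝ) ≠ 0 := by exact_mod_cast r.factorial_ne_zero
  rw [Nat.descFactorial_eq_factorial_mul_choose] at h
  push_cast at h
  simp only [Polynomial.eval_mul, Polynomial.eval_C, Polynomial.eval_comp, Polynomial.eval_add,
    Polynomial.eval_X]
  rw [h]
  field_simp

/-- The number of functions with sum `n` and given truncation `t`. -/
noncomputable def cnt {k : ℕ} (C : ℕ) (t : Fin k → ℕ) (n : ℕ) : ℕ :=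
  ((Finset.piAntidiag (Finset.univ : Finset (Fin k)) n).filter
    (fun x => (fun j => min (x j) C) = t)).card

lemma cnt_eq {k : ℕ} (C : ℕ) (t : Fin k → ℕ) (ht : ∀ j, t j ≤ C) (n : ℕ)
    (hn : ∑ j, t j ≤ n) :
    cnt C t n = ((Finset.univ.filter (fun j => t j = C)).card).multichoose (n - ∑ j, t j) := by
  classical
  rw [← Finset.card_finsuppAntidiag_nat_eq_multichoose, cnt]
  refine Finset.card_bij' (fun x _ => Finsupp.equivFunOnFinite.symm (fun j => x j - t j))
    (fun y _ => fun j => y j + t j) ?_ ?_ ?_ ?_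
  · intro x hx
    simp only [Finset.mem_filter, Finset.mem_piAntidiag, Finset.mem_univ] at hx
    obtain ⟨⟨hs, -⟩, hx⟩ := hx
    have hle : ∀ j, t j ≤ x j := fun j => by rw [← hx]; exact min_le_left _ _
    have hz : ∀ j, t j ≠ C → x j - t j = 0 := fun j hj => by
      have := congrFun hx j
      have h2 := ht j
      omega
    rw [Finset.mem_finsuppAntidiag]
    constructor
    · simp only [Finsupp.equivFunOnFinite_symm_apply_apply]
      rw [Finset.sum_filter_of_ne (fun j _ h => by by_contra h'; exact h (hz j h'))]
      rw [Finset.sum_tsub_distrib _ (fun j _ => hle j), hs]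
    · intro j hj
      simp only [Finsupp.mem_support_iff, Finsupp.equivFunOnFinite_symm_apply_apply] at hj
      simp only [Finset.mem_filter, Finset.mem_univ, true_and]
      by_contra h'; exact hj (hz j h')
  · intro y hy
    rw [Finset.mem_finsuppAntidiag] at hy
    obtain ⟨hs, hy⟩ := hy
    have hz : ∀ j, t j ≠ C → y j = 0 := fun j hj => by
      by_contra h
      have := hy (Finsupp.mem_support_iff.2 h)
      simp only [Finset.mem_filter, Finset.mem_univ, true_and] at this
      exact hj this
    simp only [Finset.mem_filter, Finset.mem_piAntidiag, Finset.mem_univ]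
    refine ⟨⟨?_, by simp⟩, ?_⟩
    · rw [Finset.sum_filter_of_ne (fun j _ h => by by_contra h'; exact h (hz j h'))] at hs
      rw [Finset.sum_add_distrib, hs]
      omega
    · funext j
      have := hz j
      have h2 := ht j
      by_cases h : t j = C
      · omega
      · have := this h; omega
  · intro x hx
    simp only [Finset.mem_filter, Finset.mem_piAntidiag, Finset.mem_univ] at hx
    obtain ⟨⟨hs, -⟩, hx⟩ := hx
    have hle : ∀ j, t j ≤ x j := fun j => by rw [← hx]; exact min_le_left _ _
    funext j
    simp [hle j]
  · intro y hy
    ext j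
    simp

lemma cnt_poly {k : ℕ} (C : ℕ) (t : Fin k → ℕ) (ht : ∀ j, t j ≤ C) :
    ∃ c : ℕ, ∃ P : Polynomial ℝ, ∀ n : ℕ, c < n → (cnt C t n : ℝ) = P.eval (n : ℝ) := by
  rcases h : (Finset.univ.filter (fun j => t j = C)).card with _ | r
  · refine ⟨∑ j, t j, 0, fun n hn => ?_⟩
    rw [cnt_eq C t ht n hn.le, h]
    obtain ⟨m, hm⟩ : ∃ m, n - ∑ j, t j = m + 1 := ⟨n - ∑ j, t j - 1, by omega⟩
    rw [hm]; simp
  · obtain ⟨P, hP⟩ := exists_poly_choose r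
    refine ⟨∑ j, t j, P.comp (Polynomial.X - Polynomial.C (((∑ j, t j : ℕ)) : ℝ)),
      fun n hn => ?_⟩
    rw [cnt_eq C t ht n hn.le, h, Nat.multichoose_eq]
    have : r + 1 + (n - ∑ j, t j) - 1 = (n - ∑ j, t j) + r := by omega
    rw [this, Nat.choose_symm_add, hP, Polynomial.eval_comp]
    simp only [Polynomial.eval_sub, Polynomial.eval_X, Polynomial.eval_C]
    rw [Nat.cast_sub hn.le]

lemma sep_of_sum_prod {l : ℕ} {T : Type*} (S : Finset T) (g : T → Fin l → ℕ → ℝ)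
    (hg : ∀ t ∈ S, ∀ i, ∃ c : ℕ, ∃ P : Polynomial ℝ, ∀ n : ℕ, c < n → g t i n = P.eval (n : ℝ)) :
    StronglyEventuallyPolynomial (fun n : Fin l → ℕ => ∑ t ∈ S, ∏ i, g t i (n i)) := by
  classical
  have hg' : ∀ t i, ∃ c : ℕ, ∃ P : Polynomial ℝ, t ∈ S →
      ∀ n : ℕ, c < n → g t i n = P.eval (n : ℝ) := by
    intro t i
    by_cases h : t ∈ S
    · obtain ⟨c, P, hP⟩ := hg t h i
      exact ⟨c, P, fun _ => hP⟩
    · exact ⟨0, 0, fun h' => absurd h' h⟩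
  choose c P hP using hg'
  refine ⟨(∑ t ∈ S, ∑ i, c t i) + 1, Nat.succ_pos _, fun w => ∑ t ∈ S, ∏ i,
    (match w i with
      | some m => MvPolynomial.C (g t i m)
      | none => Polynomial.aeval (MvPolynomial.X i) (P t i)), fun n => ?_⟩
  simp only [map_sum, map_prod]
  refine Finset.sum_congr rfl fun t ht => Finset.prod_congr rfl fun i _ => ?_
  by_cases h : n i ≤ (∑ t ∈ S, ∑ i, c t i) + 1
  · simp [h]
  · have h1 : c t i ≤ ∑ i, c t i :=
      Finset.single_le_sum (f := fun i => c t i) (fun _ _ => Nat.zero_le _) (Finset.mem_univ i)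
    have h2 : ∑ i, c t i ≤ ∑ t ∈ S, ∑ i, c t i :=
      Finset.single_le_sum (f := fun t => ∑ i, c t i) (fun _ _ => Nat.zero_le _) ht
    simp only [h, if_false]
    rw [hP t i ht (n i) (by omega), Polynomial.aeval_def, Polynomial.hom_eval₂]
    rw [← Polynomial.eval₂_id]
    congr 1
    · ext r; simp
    · simp

lemma mem_iterSumset_range {G : Type*} [AddCommMonoid G] {k : ℕ} (a : Fin k → G) (n : ℕ) (g : G) :
    g ∈ iterSumset n (Set.range a) ↔ ∃ x : Fin k → ℕ, ∑ j, x j = n ∧ ∑ j, x j • a j = g := by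
  classical
  induction n generalizing g with
  | zero =>
    simp only [iterSumset, Set.mem_singleton_iff]
    constructor
    · rintro rfl; exact ⟨0, by simp, by simp⟩
    · rintro ⟨x, hx, rfl⟩
      rw [Finset.sum_eq_zero_iff] at hx
      exact Finset.sum_eq_zero fun j hj => by rw [hx j hj, zero_smul]
  | succ n ih =>
    simp only [iterSumset, Set.mem_add]
    constructor
    · rintro ⟨u, hu, _, ⟨j, rfl⟩, rfl⟩
      obtain ⟨x, hx, rfl⟩ := (ih u).1 hu
      refine ⟨x + Pi.single j 1, ?_, ?_⟩
      · simp [Finset.sum_add_distrib, hx]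
      · simp [add_smul, Finset.sum_add_distrib, Pi.single_apply, ite_smul]
    · rintro ⟨x, hx, rfl⟩
      obtain ⟨j, hj⟩ : ∃ j, x j ≠ 0 := by
        by_contra! h
        simp [h] at hx
      obtain ⟨y, rfl⟩ : ∃ y : Fin k → ℕ, x = y + Pi.single j 1 := by
        refine ⟨x - Pi.single j 1, ?_⟩
        funext i
        by_cases h : i = j
        · subst h; simp; omega
        · simp [h]
      refine ⟨∑ j, y j • a j, (ih _).2 ⟨y, ?_, rfl⟩, a j, ⟨j, rfl⟩, ?_⟩
      · simpa [Finset.sum_add_distrib] using hx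
      · simp [add_smul, Finset.sum_add_distrib, Pi.single_apply, ite_smul]

/-- Dickson: membership in an upper set depends only on a truncation. -/
lemma upper_trunc {l : ℕ} {k : Fin l → ℕ} (U : Set (∀ i, Fin (k i) → ℕ)) (hU : IsUpperSet U) :
    ∃ C : ℕ, ∀ x, x ∈ U ↔ (fun i j => min (x i j) C) ∈ U := by
  have hfin : {x | Minimal (· ∈ U) x}.Finite :=
    WellQuasiOrderedLE.finite_of_isAntichain (setOfPred_minimal_antichain (· ∈ U))
  refine ⟨∑ m ∈ hfin.toFinset, ∑ i, ∑ j, m i j, fun x => ⟨fun hx => ?_, fun hx => ?_⟩⟩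
  · obtain ⟨m, hmx, hm⟩ := exists_minimal_le_of_wellFoundedLT (· ∈ U) x hx
    refine hU ?_ hm.prop
    intro i j
    refine le_min (hmx i j) ?_
    calc m i j ≤ ∑ j, m i j :=
          Finset.single_le_sum (f := fun j => m i j) (fun _ _ => Nat.zero_le _) (Finset.mem_univ j)
      _ ≤ ∑ i, ∑ j, m i j :=
          Finset.single_le_sum (f := fun i => ∑ j, m i j) (fun _ _ => Nat.zero_le _)
            (Finset.mem_univ i)
      _ ≤ _ := Finset.single_le_sum (f := fun m : (∀ i, Fin (k i) → ℕ) => ∑ i, ∑ j, m i j)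
            (fun _ _ => Nat.zero_le _) (hfin.mem_toFinset.2 hm)
  · exact hU (fun i j => min_le_left _ _) hx

/-- Additive embedding to a linearly ordered cancellative monoid. -/
def lexify {l : ℕ} {k : Fin l → ℕ} (x : ∀ i, Fin (k i) → ℕ) :
    Lex (∀ i, Lex (Fin (k i) → ℕ)) := toLex (fun i => toLex (x i))

lemma lexify_inj {l : ℕ} {k : Fin l → ℕ} : Function.Injective (lexify (k := k)) := by
  intro x y h
  exact h

lemma lexify_add {l : ℕ} {k : Fin l → ℕ} (x y : ∀ i, Fin (k i) → ℕ) :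
    lexify (x + y) = lexify x + lexify y := rfl

lemma card_range {G : Type*} [AddCommMonoid G] {l : ℕ} (k : Fin l → ℕ)
    (a : ∀ i, Fin (k i) → G) :
    StronglyEventuallyPolynomial
      (fun n : Fin l → ℕ => ((∑ i, iterSumset (n i) (Set.range (a i))).ncard : ℝ)) := by
  classical
  let π : (∀ i, Fin (k i) → ℕ) → G := fun x => ∑ i, ∑ j, x i j • a i j
  have hπ : ∀ x y, π (x + y) = π x + π y := fun x y => by
    simp [π, add_smul, Finset.sum_add_distrib]
  let U : Set (∀ i, Fin (k i) → ℕ) :=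
    {x | ∃ y, (∀ i, ∑ j, y i j = ∑ j, x i j) ∧ π y = π x ∧ lexify y < lexify x}
  have hU : IsUpperSet U := by
    rintro x x' hxx ⟨y, h1, h2, h3⟩
    obtain ⟨z, rfl⟩ : ∃ z, x' = x + z := ⟨x' - x, by
      funext i j; have : x i j ≤ x' i j := hxx i j; simp only [Pi.add_apply, Pi.sub_apply]; omega⟩
    refine ⟨y + z, fun i => ?_, ?_, ?_⟩
    · simp [Finset.sum_add_distrib, h1 i]
    · rw [hπ, hπ, h2]
    · rw [lexify_add, lexify_add]
      exact add_lt_add_left h3 _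
  obtain ⟨C, hC⟩ := upper_trunc U hU
  let S : (Fin l → ℕ) → Finset (∀ i, Fin (k i) → ℕ) := fun n =>
    Fintype.piFinset fun i => Finset.piAntidiag Finset.univ (n i)
  have hS : ∀ n x, x ∈ S n ↔ ∀ i, ∑ j, x i j = n i := fun n x => by simp [S]
  let T : Finset (∀ i, Fin (k i) → ℕ) :=
    (Fintype.piFinset fun i => Fintype.piFinset fun j => Finset.range (C + 1)).filter (· ∉ U)
  have hT : ∀ t ∈ T, ∀ i j, t i j ≤ C := fun t ht i j => by
    simp only [T, Finset.mem_filter, Fintype.mem_piFinset, Finset.mem_range] at ht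
    have := ht.1 i j
    omega
  have key : (fun n : Fin l → ℕ => ((∑ i, iterSumset (n i) (Set.range (a i))).ncard : ℝ)) =
      fun n => ∑ t ∈ T, ∏ i, (cnt C (t i) (n i) : ℝ) := by
    funext n
    have himg : (∑ i, iterSumset (n i) (Set.range (a i))) =
        ((((S n).filter (· ∉ U)).image π : Finset G) : Set G) := by
      ext g
      rw [Set.mem_fintype_sum, Finset.mem_coe, Finset.mem_image]
      constructor
      · rintro ⟨f, hf, rfl⟩
        simp only [mem_iterSumset_range] at hf
        choose x hx1 hx2 using hf
        have hne : ((S n).filter (fun y => π y = π x)).Nonempty :=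
          ⟨x, by simp only [Finset.mem_filter, hS, and_true]; exact hx1⟩
        obtain ⟨y, hy, hmin⟩ := Finset.exists_min_image _ lexify hne
        rw [Finset.mem_filter, hS] at hy
        refine ⟨y, ?_, ?_⟩
        · rw [Finset.mem_filter, hS]
          refine ⟨hy.1, ?_⟩
          rintro ⟨z, h1, h2, h3⟩
          refine absurd (hmin z ?_) (not_le.2 h3)
          rw [Finset.mem_filter, hS]
          exact ⟨fun i => (h1 i).trans (hy.1 i), h2.trans hy.2⟩
        · rw [hy.2]
          exact Finset.sum_congr rfl fun i _ => hx2 i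
      · rintro ⟨x, hx, rfl⟩
        rw [Finset.mem_filter, hS] at hx
        exact ⟨fun i => ∑ j, x i j • a i j,
          fun i => (mem_iterSumset_range _ _ _).2 ⟨x i, hx.1 i, rfl⟩, rfl⟩
    have hinj : Set.InjOn π (((S n).filter (· ∉ U) : Finset _) : Set _) := by
      intro x hx y hy hxy
      rw [Finset.mem_coe, Finset.mem_filter, hS] at hx hy
      rcases lt_trichotomy (lexify x) (lexify y) with h | h | h
      · exact absurd ⟨x, fun i => (hx.1 i).trans (hy.1 i).symm, hxy, h⟩ hy.2
      · exact lexify_inj h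
      · exact absurd ⟨y, fun i => (hy.1 i).trans (hx.1 i).symm, hxy.symm, h⟩ hx.2
    rw [himg, Set.ncard_coe_finset, Finset.card_image_of_injOn hinj]
    rw [Finset.card_eq_sum_card_fiberwise (f := fun x i j => min (x i j) C) (t := T)]
    · push_cast
      refine Finset.sum_congr rfl fun t ht => ?_
      rw [← Nat.cast_prod]
      congr 1
      simp only [cnt]
      rw [← Fintype.card_piFinset]
      congr 1
      ext x
      simp only [Finset.mem_filter, hS, Fintype.mem_piFinset, Finset.mem_piAntidiag,
        Finset.mem_univ, implies_true, and_true]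
      constructor
      · rintro ⟨⟨h1, h2⟩, h3⟩ i
        exact ⟨h1 i, congrFun h3 i⟩
      · intro h
        have h3 : (fun i j => min (x i j) C) = t := funext fun i => (h i).2
        refine ⟨⟨fun i => (h i).1, ?_⟩, h3⟩
        rw [hC, h3]
        exact (Finset.mem_filter.1 ht).2
    · intro x hx
      rw [Finset.mem_coe, Finset.mem_filter] at hx
      rw [Finset.mem_coe, Finset.mem_filter]
      refine ⟨?_, fun h => hx.2 ((hC x).2 h)⟩
      simp only [Fintype.mem_piFinset, Finset.mem_range]
      intro i j
      exact Nat.lt_succ_of_le (min_le_right _ _)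
  rw [key]
  exact sep_of_sum_prod T (fun t i n => (cnt C (t i) n : ℝ))
    fun t ht i => cnt_poly C (t i) (hT t ht i)

/-- For finite sets `A₁, …, A_l` in a commutative semigroup, the
function `(n₁,…,n_l) ↦ |n₁*A₁ + ⋯ + n_l*A_l|` is strongly eventually polynomial. -/
theorem card_sumset_strongly_eventually_polynomial
    {G : Type*} [AddCommMonoid G] {l : ℕ} (A : Fin l → Set G)
    (hA : ∀ i, (A i).Finite) :
    StronglyEventuallyPolynomial
      (fun n : Fin l → ℕ => ((∑ i, iterSumset (n i) (A i)).ncard : ℝ)) := by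
  have h : ∀ i, ∃ k : ℕ, ∃ a : Fin k → G, Set.range a = A i := fun i => by
    obtain ⟨k, a, -, ha⟩ := (hA i).fin_param
    exact ⟨k, a, ha⟩
  choose k a ha using h
  have := card_range k a
  simpa only [ha] using this
end

section
/- Let A be a finite subset of a commutative semigroup (G,+). Then there exist a constant c > 0 and a polynomial p such that for all integers n > c, the cardinality |n*A| of the n-fold sumset equals p(n). -/
open Pointwise

/-- The `n`-fold sumset `n*A = {a₁+⋯+a_n : aᵢ ∈ A}` in a (commutative) semigroup,
defined for `n ≥ 1` (the value at `n = 0` is an irrelevant junk value `∅`). -/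
def nmulSet {G : Type*} [Add G] (A : Set G) : ℕ → Set G
  | 0 => ∅
  | 1 => A
  | n + 2 => nmulSet A (n + 1) + A

/-- Eventually polynomial rational sequences. -/
def EvPoly (f : ℕ → ℚ) : Prop :=
  ∃ c : ℕ, ∃ p : Polynomial ℚ, ∀ n : ℕ, c < n → f n = p.eval (n : ℚ)

theorem EvPoly.add {f g : ℕ → ℚ} (hf : EvPoly f) (hg : EvPoly g) :
    EvPoly (fun n => f n + g n) := by
  obtain ⟨c, p, hp⟩ := hf
  obtain ⟨d, q, hq⟩ := hg
  refine ⟨max c d, p + q, fun n hn => ?_⟩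
  rw [max_lt_iff] at hn
  simp [hp n hn.1, hq n hn.2]

theorem EvPoly.sub {f g : ℕ → ℚ} (hf : EvPoly f) (hg : EvPoly g) :
    EvPoly (fun n => f n - g n) := by
  obtain ⟨c, p, hp⟩ := hf
  obtain ⟨d, q, hq⟩ := hg
  refine ⟨max c d, p - q, fun n hn => ?_⟩
  rw [max_lt_iff] at hn
  simp [hp n hn.1, hq n hn.2]

theorem EvPoly.finsum {ι : Type*} (s : Finset ι) {f : ι → ℕ → ℚ}
    (hf : ∀ i ∈ s, EvPoly (f i)) : EvPoly (fun n => ∑ i ∈ s, f i n) := by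
  classical
  induction s using Finset.induction_on with
  | empty => exact ⟨0, 0, by simp⟩
  | insert a s ha ih =>
    simp only [Finset.sum_insert ha]
    exact (hf a (by simp)).add (ih fun i hi => hf i (by simp [hi]))

theorem EvPoly.congr {f g : ℕ → ℚ} (hf : EvPoly f) (T : ℕ) (h : ∀ n, T < n → g n = f n) :
    EvPoly g := by
  obtain ⟨c, p, hp⟩ := hf
  refine ⟨max c T, p, fun n hn => ?_⟩
  rw [max_lt_iff] at hn
  rw [h n hn.2, hp n hn.1]

theorem EvPoly.shift {f : ℕ → ℚ} (hf : EvPoly f) (t : ℕ) : EvPoly (fun n => f (n - t)) := by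
  obtain ⟨c, p, hp⟩ := hf
  refine ⟨c + t, p.comp (Polynomial.X - Polynomial.C (t : ℚ)), fun n hn => ?_⟩
  change f (n - t) = _
  rw [hp (n - t) (by omega), Nat.cast_sub (by omega)]
  simp

theorem exists_poly_sum (p : Polynomial ℚ) :
    ∃ q : Polynomial ℚ, ∀ n : ℕ, ∑ m ∈ Finset.range n, p.eval (m : ℚ) = q.eval (n : ℚ) := by
  induction p using Polynomial.induction_on' with
  | add p q hp hq =>
    obtain ⟨p', hp⟩ := hp
    obtain ⟨q', hq⟩ := hq
    exact ⟨p' + q', fun n => by simp [Finset.sum_add_distrib, hp, hq]⟩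
  | monomial k a =>
    refine ⟨Polynomial.C (a / (k + 1)) *
      (Polynomial.bernoulli (k + 1) - Polynomial.C (bernoulli (k + 1))), fun n => ?_⟩
    have h := Polynomial.sum_range_pow_eq_bernoulli_sub n k
    have hk : (k : ℚ) + 1 ≠ 0 := by positivity
    simp only [Polynomial.eval_monomial, ← Finset.mul_sum, Polynomial.eval_mul,
      Polynomial.eval_C, Polynomial.eval_sub]
    rw [Nat.succ_eq_add_one] at h
    rw [← h]
    field_simp

theorem EvPoly.sum {f : ℕ → ℚ} (hf : EvPoly f) :
    EvPoly (fun n => ∑ m ∈ Finset.range (n + 1), f m) := by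
  obtain ⟨c, p, hp⟩ := hf
  obtain ⟨q, hq⟩ := exists_poly_sum p
  refine ⟨c, q.comp (Polynomial.X + 1) +
    Polynomial.C (∑ m ∈ Finset.range (c + 1), (f m - p.eval (m : ℚ))), fun n hn => ?_⟩
  have h1 : ∑ m ∈ Finset.range (c + 1), (f m - p.eval (m : ℚ))
      = ∑ m ∈ Finset.range (n + 1), (f m - p.eval (m : ℚ)) := by
    apply Finset.sum_subset
    · intro x hx
      simp only [Finset.mem_range] at *
      omega
    · intro x _ hx
      simp only [Finset.mem_range] at hx
      rw [hp x (by omega), sub_self]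
  rw [h1, Finset.sum_sub_distrib, hq (n + 1), Polynomial.eval_add, Polynomial.eval_C]
  simp

/-- number of tuples of degree `n` outside `U` -/
noncomputable def outCount {k : ℕ} (U : Set (Fin k → ℕ)) (n : ℕ) : ℕ := by
  classical
  exact ((Finset.Nat.antidiagonalTuple k n).filter (fun x => x ∉ U)).card

/-- slice of `U` -/
def sliceSet {k : ℕ} (U : Set (Fin (k + 1) → ℕ)) (t : ℕ) : Set (Fin k → ℕ) :=
  {y | (Fin.cons t y : Fin (k + 1) → ℕ) ∈ U}

theorem outCount_succ {k : ℕ} (U : Set (Fin (k + 1) → ℕ)) (n : ℕ) :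
    outCount U n = ∑ t ∈ Finset.range (n + 1), outCount (sliceSet U t) (n - t) := by
  classical
  unfold outCount
  rw [Finset.card_eq_sum_card_fiberwise (f := fun x => x 0) (t := Finset.range (n + 1))]
  · refine Finset.sum_congr rfl fun t ht => ?_
    simp only [Finset.mem_range] at ht
    refine Finset.card_nbij' (fun x => Fin.tail x) (fun y => Fin.cons t y) ?_ ?_ ?_ ?_
    · intro x hx
      simp only [Finset.coe_filter, Finset.mem_filter, Finset.Nat.mem_antidiagonalTuple,
        Set.mem_ofPred_eq, Fin.sum_univ_succ] at hx ⊢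
      obtain ⟨⟨h1, h2⟩, h3⟩ := hx
      refine ⟨?_, ?_⟩
      · simp only [Fin.tail]
        omega
      · simp only [sliceSet, Set.mem_ofPred_eq, ← h3, Fin.cons_self_tail]
        exact h2
    · intro y hy
      simp only [Finset.coe_filter, Finset.mem_filter, Finset.Nat.mem_antidiagonalTuple,
        Set.mem_ofPred_eq, Fin.sum_univ_succ, Fin.cons_zero, Fin.cons_succ] at hy ⊢
      refine ⟨⟨by omega, hy.2⟩, trivial⟩
    · intro x hx
      simp only [Finset.coe_filter, Finset.mem_filter, Set.mem_ofPred_eq] at hx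
      rw [← hx.2]
      exact Fin.cons_self_tail x
    · intro y hy
      simp
  · intro x hx
    simp only [Finset.coe_filter, Finset.Nat.mem_antidiagonalTuple,
        Set.mem_ofPred_eq, Fin.sum_univ_succ] at hx
    simp only [Finset.coe_range, Set.mem_Iio]
    omega

theorem slices_stabilize {k : ℕ} (V : ℕ → Set (Fin k → ℕ)) (hV : ∀ t, IsUpperSet (V t))
    (hm : Monotone V) : ∃ T, ∀ t, T ≤ t → V t = V T := by
  set W : Set (Fin k → ℕ) := ⋃ t, V t with hW
  have hfin : {x | Minimal (· ∈ W) x}.Finite := by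
    apply WellQuasiOrderedLE.finite_of_isAntichain
    intro x hx y hy hne hle
    exact hne (le_antisymm hle (hy.2 hx.1 hle))
  have hmem : ∀ x : Fin k → ℕ, ∃ t, Minimal (· ∈ W) x → x ∈ V t := by
    intro x
    by_cases h : Minimal (· ∈ W) x
    · obtain ⟨t, ht⟩ := Set.mem_iUnion.1 h.1
      exact ⟨t, fun _ => ht⟩
    · exact ⟨0, fun h' => absurd h' h⟩
  choose τ hτ using hmem
  refine ⟨hfin.toFinset.sup τ, fun t ht => ?_⟩
  apply Set.Subset.antisymm _ (hm ht)
  intro x hx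
  obtain ⟨y, hyx, hy⟩ := exists_minimal_le_of_wellFoundedLT (· ∈ W) x
    (Set.mem_iUnion.2 ⟨t, hx⟩)
  refine hV _ hyx (hm ?_ (hτ y hy))
  exact Finset.le_sup (f := τ) (by simpa using hy)

theorem outCount_evPoly {k : ℕ} (U : Set (Fin k → ℕ)) (hU : IsUpperSet U) :
    EvPoly (fun n => (outCount U n : ℚ)) := by
  induction k with
  | zero =>
    refine ⟨0, 0, fun n hn => ?_⟩
    obtain ⟨m, rfl⟩ : ∃ m, n = m + 1 := ⟨n - 1, by omega⟩
    simp [outCount]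
  | succ k ih =>
    have hcons : ∀ {s t : ℕ} {x y : Fin k → ℕ}, s ≤ t → x ≤ y →
        (Fin.cons s x : Fin (k + 1) → ℕ) ≤ Fin.cons t y := by
      intro s t x y h1 h2 i
      refine Fin.cases ?_ (fun j => ?_) i
      · simpa using h1
      · simpa using h2 j
    have hup : ∀ t, IsUpperSet (sliceSet U t) := fun t x y hxy hx =>
      hU (hcons le_rfl hxy) hx
    have hmono : Monotone (sliceSet U) := fun s t hst x hx => hU (hcons hst le_rfl) hx
    obtain ⟨T, hT⟩ := slices_stabilize _ hup hmono
    have e1 : EvPoly (fun n => ∑ t ∈ Finset.range T,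
        ((outCount (sliceSet U t) (n - t) : ℚ) - outCount (sliceSet U T) (n - t))) :=
      EvPoly.finsum _ fun t _ => ((ih _ (hup t)).shift t).sub ((ih _ (hup T)).shift t)
    refine (e1.add (ih _ (hup T)).sum).congr T fun n hn => ?_
    have h1 : ∑ t ∈ Finset.range T,
        ((outCount (sliceSet U t) (n - t) : ℚ) - outCount (sliceSet U T) (n - t))
        = ∑ t ∈ Finset.range (n + 1),
        ((outCount (sliceSet U t) (n - t) : ℚ) - outCount (sliceSet U T) (n - t)) := by
      apply Finset.sum_subset
      · intro x hx
        simp only [Finset.mem_range] at *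
        omega
      · intro x _ hx
        simp only [Finset.mem_range] at hx
        rw [hT x (by omega), sub_self]
    have h2 := Finset.sum_range_reflect (fun m => (outCount (sliceSet U T) m : ℚ)) (n + 1)
    simp only [Nat.add_sub_cancel] at h2
    rw [h1, Finset.sum_sub_distrib, h2, outCount_succ]
    push_cast
    ring

theorem exists_eq_add_single {k n : ℕ} (x : Fin k → ℕ) (hx : ∑ i, x i = n + 1) :
    ∃ (i : Fin k) (y : Fin k → ℕ), x = y + Pi.single i 1 ∧ ∑ i, y i = n := by
  classical
  obtain ⟨i, hi⟩ : ∃ i, x i ≠ 0 := by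
    by_contra! h
    simp [h] at hx
  have hxe : x = (x - Pi.single i 1) + Pi.single i 1 := by
    ext j
    by_cases h : j = i
    · subst h
      simp
      omega
    · simp [h]
  refine ⟨i, x - Pi.single i 1, hxe, ?_⟩
  rw [hxe] at hx
  simp only [Pi.add_apply, Finset.sum_add_distrib, Finset.sum_pi_single', Finset.mem_univ,
    if_true] at hx
  simpa using hx

/-- Linear combination map. -/
def combo {M : Type*} [AddCommMonoid M] {k : ℕ} (a : Fin k → M) (x : Fin k → ℕ) : M :=
  ∑ i, x i • a i

theorem combo_add {M : Type*} [AddCommMonoid M] {k : ℕ} (a : Fin k → M) (x y : Fin k → ℕ) :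
    combo a (x + y) = combo a x + combo a y := by
  simp [combo, add_smul, Finset.sum_add_distrib]

theorem combo_single {M : Type*} [AddCommMonoid M] {k : ℕ} (a : Fin k → M) (i : Fin k) :
    combo a (Pi.single i 1) = a i := by
  classical
  unfold combo
  rw [Finset.sum_eq_single i]
  · simp
  · intro j _ hj
    simp [hj]
  · simp

theorem image_nmulSet {G : Type*} [AddCommSemigroup G] {k : ℕ} (a : Fin k → G) (n : ℕ) :
    (fun g : G => (g : WithZero G)) '' nmulSet (Set.range a) (n + 1) =
      combo (fun i => (a i : WithZero G)) '' {x | ∑ i, x i = n + 1} := by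
  induction n with
  | zero =>
    ext s
    simp only [nmulSet, Set.mem_image, Set.mem_range, Set.mem_ofPred_eq]
    constructor
    · rintro ⟨_, ⟨i, rfl⟩, rfl⟩
      exact ⟨Pi.single i 1, by simp, combo_single _ i⟩
    · rintro ⟨x, hx, rfl⟩
      obtain ⟨i, y, rfl, hy⟩ := exists_eq_add_single x hx
      have hy0 : y = 0 := by
        ext j
        simpa using (Finset.sum_eq_zero_iff.1 hy) j
      subst hy0
      exact ⟨a i, ⟨i, rfl⟩, by rw [zero_add, combo_single]⟩
  | succ n ih =>
    ext s
    simp only [nmulSet]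
    constructor
    · rintro ⟨_, ⟨g, hg, _, ⟨i, rfl⟩, rfl⟩, rfl⟩
      have : (g : WithZero G) ∈ (fun g : G => (g : WithZero G)) '' nmulSet (Set.range a) (n + 1) :=
        ⟨g, hg, rfl⟩
      rw [ih] at this
      obtain ⟨x, hx, hxg⟩ := this
      refine ⟨x + Pi.single i 1, ?_, ?_⟩
      · simp only [Set.mem_ofPred_eq] at hx ⊢
        simp [Finset.sum_add_distrib, hx]
      · rw [combo_add, combo_single, hxg]
        rfl
    · rintro ⟨x, hx, rfl⟩
      obtain ⟨i, y, rfl, hy⟩ := exists_eq_add_single x hx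
      have : combo (fun i => (a i : WithZero G)) y ∈
          combo (fun i => (a i : WithZero G)) '' {x | ∑ i, x i = n + 1} := ⟨y, hy, rfl⟩
      rw [← ih] at this
      obtain ⟨g, hg, hgy⟩ := this
      refine ⟨g + a i, ⟨g, hg, a i, ⟨i, rfl⟩, rfl⟩, ?_⟩
      rw [combo_add, combo_single, ← hgy]
      rfl

/-- useless tuples -/
def useless {M : Type*} [AddCommMonoid M] {k : ℕ} (a : Fin k → M) : Set (Fin k → ℕ) :=
  {x | ∃ y : Fin k → ℕ, toLex y < toLex x ∧ ∑ i, y i = ∑ i, x i ∧ combo a y = combo a x}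

theorem useless_upper {M : Type*} [AddCommMonoid M] {k : ℕ} (a : Fin k → M) :
    IsUpperSet (useless a) := by
  rintro x x' hxx ⟨y, h1, h2, h3⟩
  obtain ⟨z, rfl⟩ : ∃ z, x' = x + z := ⟨x' - x, (add_tsub_cancel_of_le hxx).symm⟩
  refine ⟨y + z, ?_, ?_, ?_⟩
  · rw [toLex_add, toLex_add]
    exact add_lt_add_left h1 _
  · simp [Finset.sum_add_distrib, h2]
  · rw [combo_add, combo_add, h3]

theorem ncard_combo {M : Type*} [AddCommMonoid M] {k : ℕ} (a : Fin k → M) (n : ℕ) :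
    (combo a '' {x | ∑ i, x i = n}).ncard = outCount (useless a) n := by
  classical
  have h : combo a '' {x | ∑ i, x i = n} = combo a ''
      (((Finset.Nat.antidiagonalTuple k n).filter (fun x => x ∉ useless a) : Finset _) :
        Set (Fin k → ℕ)) := by
    apply Set.Subset.antisymm
    · rintro _ ⟨x, hx, rfl⟩
      obtain ⟨y, -, hy⟩ := exists_minimal_le_of_wellFoundedLT
        (fun y : Lex (Fin k → ℕ) => ∑ i, ofLex y i = n ∧ combo a (ofLex y) = combo a x)
        (toLex x) ⟨hx, rfl⟩
      refine ⟨ofLex y, ?_, hy.1.2⟩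
      simp only [Finset.coe_filter, Finset.Nat.mem_antidiagonalTuple, Set.mem_ofPred_eq]
      refine ⟨hy.1.1, ?_⟩
      rintro ⟨z, h1, h2, h3⟩
      exact absurd (hy.2 (y := toLex z) ⟨h2.trans hy.1.1, h3.trans hy.1.2⟩ h1.le) (not_le.2 h1)
    · apply Set.image_mono
      intro x hx
      simp only [Finset.coe_filter, Finset.Nat.mem_antidiagonalTuple, Set.mem_ofPred_eq] at hx
      exact hx.1
  rw [h, Set.ncard_image_of_injOn, Set.ncard_coe_finset]
  · unfold outCount
    congr!
  · intro x hx y hy hxy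
    simp only [Finset.coe_filter, Finset.Nat.mem_antidiagonalTuple, Set.mem_ofPred_eq] at hx hy
    rcases lt_trichotomy (toLex x) (toLex y) with hlt | heq | hlt
    · exact absurd ⟨x, hlt, hx.1.trans hy.1.symm, hxy⟩ hy.2
    · exact toLex.injective heq
    · exact absurd ⟨y, hlt, hy.1.trans hx.1.symm, hxy.symm⟩ hx.2

/-- Khovanskiĭ. Let `A` be a finite subset of a commutative
semigroup `(G,+)`. Then there exist a constant `c > 0` and a polynomial `p` such that
for all integers `n > c`, the cardinality `|n*A|` equals `p(n)`. -/
theorem card_sumset_eventually_polynomial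
    {G : Type*} [AddCommSemigroup G] (A : Set G) (hA : A.Finite) :
    ∃ c : ℕ, 0 < c ∧ ∃ p : Polynomial ℝ, ∀ n : ℕ, c < n →
      ((nmulSet A n).ncard : ℝ) = p.eval (n : ℝ) := by
  obtain ⟨k, a, rfl⟩ : ∃ (k : ℕ) (a : Fin k → G), Set.range a = A := by
    obtain ⟨k, a, -, h⟩ := hA.fin_param
    exact ⟨k, a, h⟩
  obtain ⟨c, p, hp⟩ := outCount_evPoly _ (useless_upper (fun i => (a i : WithZero G)))
  refine ⟨c + 1, by omega, p.map (algebraMap ℚ ℝ), fun n hn => ?_⟩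
  obtain ⟨m, rfl⟩ : ∃ m, n = m + 1 := ⟨n - 1, by omega⟩
  have hinj : Function.Injective (fun g : G => (g : WithZero G)) := fun x y h =>
    WithZero.coe_inj.1 h
  rw [← Set.ncard_image_of_injective _ hinj, image_nmulSet, ncard_combo]
  have h := hp (m + 1) (by omega)
  have h2 := congrArg (algebraMap ℚ ℝ) h
  rw [← Polynomial.eval₂_at_apply, ← Polynomial.eval_map] at h2
  simpa using h2
end
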